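/- arXiv:1804.05511 — 2 statements merged into one kernel-verified Lean document; each statement's English description precedes it below -/
import Mathlib

section
/- Let Q and P be partitions of the same finite set. If Q ≺_{1/2} P and P is equitable, then |Q| ≥ (1/4)|P|. -/
open scoped Classical

noncomputable section

/-- The number of edges of a bipartite graph `G` between vertex subsets `A` and `B`. -/
def bmEdges {α β : Type*} (G : Finset (α × β)) (A : Finset α) (B : Finset β) : ℕ :=
  (G.filter fun p => p.1 ∈ A ∧ p.2 ∈ B).card

/-- The edge density of a bipartite graph `G` between `A` and `B`. -/
def bmDens {α β : Type*} (G : Finset (α × β)) (A : Finset α) (B : Finset β) : ℝ :=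
  (bmEdges G A B : ℝ) / ((A.card : ℝ) * (B.card : ℝ))

/-- `⟨δ⟩`-regularity of a bipartite graph `G` on vertex classes `(A, B)`:
for all `A' ⊆ A`, `B' ⊆ B` with `|A'| ≥ δ|A|`, `|B'| ≥ δ|B|` we have
`d_G(A',B') ≥ (1/2) d_G(A,B)`. -/
def DeltaReg {α β : Type*} (δ : ℝ) (G : Finset (α × β)) (A : Finset α) (B : Finset β) : Prop :=
  ∀ A' ⊆ A, ∀ B' ⊆ B, δ * (A.card : ℝ) ≤ (A'.card : ℝ) → δ * (B.card : ℝ) ≤ (B'.card : ℝ) →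
    bmDens G A' B' ≥ (1 / 2) * bmDens G A B

/-- Szemerédi `ε`-regularity of a bipartite graph on `(A, B)`. -/
def SzReg {α β : Type*} (ε : ℝ) (G : Finset (α × β)) (A : Finset α) (B : Finset β) : Prop :=
  ∀ A' ⊆ A, ∀ B' ⊆ B, ε * (A.card : ℝ) ≤ (A'.card : ℝ) → ε * (B.card : ℝ) ≤ (B'.card : ℝ) →
    |bmDens G A' B' - bmDens G A B| ≤ ε

/-- `P` is a partition of the finite set `S` (into nonempty parts). -/
def IsPartition {α : Type*} (P : Finset (Finset α)) (S : Finset α) : Prop :=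
  (∀ p ∈ P, p.Nonempty) ∧ (∀ p ∈ P, p ⊆ S) ∧ ∀ v ∈ S, ∃! p, p ∈ P ∧ v ∈ p

/-- `Q` refines `P`: every member of `Q` is contained in a member of `P`. -/
def Refines {α : Type*} (Q P : Finset (Finset α)) : Prop :=
  ∀ q ∈ Q, ∃ p ∈ P, q ⊆ p

/-- All parts of `P` have the same size. -/
def EquitableParts {α : Type*} (P : Finset (Finset α)) : Prop :=
  ∀ p ∈ P, ∀ q ∈ P, p.card = q.card

/-- `S ⊆_β T`, i.e. `|S \ T| < β |S|`. -/
def ApproxSub {α : Type*} [DecidableEq α] (β' : ℝ) (S T : Finset α) : Prop :=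
  ((S \ T).card : ℝ) < β' * (S.card : ℝ)

/-- `S ∈_β P`, i.e. `S ⊆_β p` for some `p ∈ P`. -/
def ApproxMem {α : Type*} [DecidableEq α] (β' : ℝ) (S : Finset α) (P : Finset (Finset α)) :
    Prop :=
  ∃ p ∈ P, ApproxSub β' S p

/-- `Q ≺_β P` for partitions `Q`, `P` of the set `S`. -/
def ApproxRefines {α : Type*} [DecidableEq α] (β' : ℝ) (Q P : Finset (Finset α))
    (S : Finset α) : Prop :=
  ∑ q ∈ Q.filter fun q => ¬ ApproxMem β' q P, (q.card : ℝ) ≤ β' * (S.card : ℝ)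

/-- The vertex partition `P ∪ Q` of a bipartite graph `G` on vertex classes `(L, R)` is
`⟨δ⟩`-regular: one can add/remove at most `δ·e(G)` edges so that the bipartite graph induced
on each pair of distinct parts is `⟨δ⟩`-regular. -/
def DeltaRegPartition {α β : Type*} [DecidableEq α] [DecidableEq β]
    (δ : ℝ) (G : Finset (α × β)) (L : Finset α) (R : Finset β)
    (P : Finset (Finset α)) (Q : Finset (Finset β)) : Prop :=
  ∃ G' : Finset (α × β), G' ⊆ L ×ˢ R ∧
    ((G' \ G).card : ℝ) + ((G \ G').card : ℝ) ≤ δ * (G.card : ℝ) ∧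
    ∀ A ∈ P, ∀ B ∈ Q, DeltaReg δ G' A B

/-- The vertex partition `P ∪ Q` of a bipartite graph `G` is perfectly `⟨δ⟩`-regular:
without modifying any edges, each pair of distinct parts induces a `⟨δ⟩`-regular graph. -/
def PerfectDeltaRegPartition {α β : Type*} (δ : ℝ) (G : Finset (α × β))
    (P : Finset (Finset α)) (Q : Finset (Finset β)) : Prop :=
  ∀ A ∈ P, ∀ B ∈ Q, DeltaReg δ G A B

/-- A 2-partition `(Z, E)` on the vertex set `S`: `Z` partitions `S`, the members of `E` are
pairwise edge-disjoint bipartite graphs between distinct parts of `Z`, and for all distinct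
`Z1, Z2 ∈ Z` the complete bipartite graph `Z1 × Z2` is the union of the members of `E`
between `Z1` and `Z2`. -/
def Is2Partition {α : Type*} [DecidableEq α]
    (Z : Finset (Finset α)) (E : Finset (Finset (α × α))) (S : Finset α) : Prop :=
  IsPartition Z S ∧
  (∀ g ∈ E, ∃ Z1 ∈ Z, ∃ Z2 ∈ Z, Z1 ≠ Z2 ∧ g ⊆ Z1 ×ˢ Z2) ∧
  (∀ g ∈ E, ∀ g' ∈ E, g ≠ g' → Disjoint g g') ∧
  ∀ Z1 ∈ Z, ∀ Z2 ∈ Z, Z1 ≠ Z2 → ∀ p ∈ Z1 ×ˢ Z2, ∃ g ∈ E, g ⊆ Z1 ×ˢ Z2 ∧ p ∈ g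

/-- The parts of `Z` contained in `A` (e.g. `Z_i`, the restriction of `Z` to `V_i`). -/
def partsIn {α : Type*} [DecidableEq α] (Z : Finset (Finset α)) (A : Finset α) :
    Finset (Finset α) :=
  Z.filter fun z => z ⊆ A

/-- The members of `E` contained in `A × B` (e.g. `E_i`). -/
def graphsIn {α : Type*} [DecidableEq α] (E : Finset (Finset (α × α))) (A B : Finset α) :
    Finset (Finset (α × α)) :=
  E.filter fun g => g ⊆ A ×ˢ B

/-- `H` is a 3-partite 3-graph on the (disjoint) vertex classes `(V1, V2, V3)`. -/
def Is3Partite {α : Type*} (H : Finset (α × α × α)) (V1 V2 V3 : Finset α) : Prop :=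
  (Disjoint V1 V2 ∧ Disjoint V1 V3 ∧ Disjoint V2 V3) ∧ H ⊆ V1 ×ˢ V2 ×ˢ V3

/-- The auxiliary bipartite graph `G_H^1` on `(V2 × V3, V1)`. -/
def GH1 {α : Type*} [DecidableEq α] (H : Finset (α × α × α)) : Finset ((α × α) × α) :=
  H.image fun t => ((t.2.1, t.2.2), t.1)

/-- The auxiliary bipartite graph `G_H^2` on `(V1 × V3, V2)`. -/
def GH2 {α : Type*} [DecidableEq α] (H : Finset (α × α × α)) : Finset ((α × α) × α) :=
  H.image fun t => ((t.1, t.2.2), t.2.1)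

/-- The auxiliary bipartite graph `G_H^3` on `(V1 × V2, V3)`. -/
def GH3 {α : Type*} [DecidableEq α] (H : Finset (α × α × α)) : Finset ((α × α) × α) :=
  H.image fun t => ((t.1, t.2.1), t.2.2)

/-- The 2-partition `(Z, E)` is `⟨δ⟩`-good: every bipartite graph in `E` (between any two
distinct vertex clusters of `Z`) is `⟨δ⟩`-regular. -/
def DeltaGood {α : Type*} [DecidableEq α] (δ : ℝ)
    (Z : Finset (Finset α)) (E : Finset (Finset (α × α))) : Prop :=
  ∀ g ∈ E, ∀ Z1 ∈ Z, ∀ Z2 ∈ Z, Z1 ≠ Z2 → g ⊆ Z1 ×ˢ Z2 → DeltaReg δ g Z1 Z2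

/-- `(Z, E)` is a `⟨δ⟩`-regular partition of the 3-partite 3-graph `H` on `(V1, V2, V3)`:
it is a `⟨δ⟩`-good 2-partition with `Z ≺ {V1, V2, V3}` and, for each `1 ≤ i ≤ 3`,
`E_i ∪ Z_i` is a `⟨δ⟩`-regular vertex partition of `G_H^i`. -/
def Delta3RegPartition {α : Type*} [DecidableEq α] (δ : ℝ) (H : Finset (α × α × α))
    (V1 V2 V3 : Finset α) (Z : Finset (Finset α)) (E : Finset (Finset (α × α))) : Prop :=
  Is2Partition Z E (V1 ∪ V2 ∪ V3) ∧ Refines Z {V1, V2, V3} ∧ DeltaGood δ Z E ∧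
  DeltaRegPartition δ (GH1 H) (V2 ×ˢ V3) V1 (graphsIn E V2 V3) (partsIn Z V1) ∧
  DeltaRegPartition δ (GH2 H) (V1 ×ˢ V3) V2 (graphsIn E V1 V3) (partsIn Z V2) ∧
  DeltaRegPartition δ (GH3 H) (V1 ×ˢ V2) V3 (graphsIn E V1 V2) (partsIn Z V3)

/-- The tower function: `twr 0 = 1` and `twr (x+1) = 2 ^ twr x`. -/
def twr : ℕ → ℕ
  | 0 => 1
  | n + 1 => 2 ^ twr n

/-- The wowzer function: `twr` iterated `x` times, applied to `1`. -/
def wow (x : ℕ) : ℕ := twr^[x] 1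

/-- The set of triangles of the triad given by bipartite graphs `e1`, `e2`, `e3`:
triples `(a, b, c)` with `(a,b) ∈ e1`, `(a,c) ∈ e2` and `(b,c) ∈ e3`. -/
def tri {α β γ : Type*} [DecidableEq α] [DecidableEq β] [DecidableEq γ]
    (e1 : Finset (α × β)) (e2 : Finset (α × γ)) (e3 : Finset (β × γ)) :
    Finset (α × β × γ) :=
  ((e1 ×ˢ e3).filter fun q => q.1.2 = q.2.1 ∧ (q.1.1, q.2.2) ∈ e2).image
    fun q => (q.1.1, q.1.2, q.2.2)

/-- The density `d_H(P)` of a triad `P = (e1, e2, e3)` in the 3-graph `H`. -/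
def triDens {α : Type*} [DecidableEq α] (H : Finset (α × α × α))
    (e1 e2 e3 : Finset (α × α)) : ℝ :=
  ((H ∩ tri e1 e2 e3).card : ℝ) / ((tri e1 e2 e3).card : ℝ)

/-- The triad `(e1, e2, e3)` is `ε`-regular in the 3-graph `H`: every subtriad `(f1, f2, f3)`
with `t(P') ≥ ε t(P)` satisfies `|d_H(P') - d_H(P)| ≤ ε`. -/
def TriadReg {α : Type*} [DecidableEq α] (ε : ℝ) (H : Finset (α × α × α))
    (e1 e2 e3 : Finset (α × α)) : Prop :=
  ∀ f1 ⊆ e1, ∀ f2 ⊆ e2, ∀ f3 ⊆ e3,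
    ε * ((tri e1 e2 e3).card : ℝ) ≤ ((tri f1 f2 f3).card : ℝ) →
    |triDens H f1 f2 f3 - triDens H e1 e2 e3| ≤ ε

/-- The triads of the 2-partition `(Z, E)`: triples of members of `E` forming a tripartite
graph on three distinct parts of `Z`. -/
def triads {α : Type*} [DecidableEq α] (Z : Finset (Finset α))
    (E : Finset (Finset (α × α))) :
    Finset (Finset (α × α) × Finset (α × α) × Finset (α × α)) :=
  (E ×ˢ E ×ˢ E).filter fun e => ∃ Z1 ∈ Z, ∃ Z2 ∈ Z, ∃ Z3 ∈ Z,
    Z1 ≠ Z2 ∧ Z1 ≠ Z3 ∧ Z2 ≠ Z3 ∧ e.1 ⊆ Z1 ×ˢ Z2 ∧ e.2.1 ⊆ Z1 ×ˢ Z3 ∧ e.2.2 ⊆ Z2 ×ˢ Z3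

/-- An `(ℓ, t, ε₂)`-equipartition on `S`: a 2-partition `(Z, E)` where `Z` is an equitable
partition of order `t` and every graph in `E` is `ε₂`-regular of density `ℓ⁻¹ ± ε₂`. -/
def IsEquipartition23 {α : Type*} [DecidableEq α] (ℓ t : ℕ) (ε₂ : ℝ)
    (Z : Finset (Finset α)) (E : Finset (Finset (α × α))) (S : Finset α) : Prop :=
  Is2Partition Z E S ∧ EquitableParts Z ∧ Z.card = t ∧
  ∀ g ∈ E, ∀ Z1 ∈ Z, ∀ Z2 ∈ Z, Z1 ≠ Z2 → g ⊆ Z1 ×ˢ Z2 →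
    SzReg ε₂ g Z1 Z2 ∧ |bmDens g Z1 Z2 - 1 / (ℓ : ℝ)| ≤ ε₂

/-- The `(ℓ,t,ε₂)`-equipartition `(Z, E)` is an `ε`-regular partition of the 3-graph `H`
with vertex set `S` (Frankl–Rödl): `Σ t(P) ≤ ε |S|³`, summed over non-`ε`-regular triads. -/
def FRRegPartition {α : Type*} [DecidableEq α] (ε : ℝ) (H : Finset (α × α × α))
    (S : Finset α) (Z : Finset (Finset α)) (E : Finset (Finset (α × α))) : Prop :=
  ∑ e ∈ (triads Z E).filter fun e => ¬ TriadReg ε H e.1 e.2.1 e.2.2,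
    ((tri e.1 e.2.1 e.2.2).card : ℝ) ≤ ε * (S.card : ℝ) ^ 3

/-- The function `f` from the definition of quasirandomness of a triad. -/
def fQ {α : Type*} [DecidableEq α] (H : Finset (α × α × α)) (e1 e2 e3 : Finset (α × α))
    (x y z : α) : ℝ :=
  if (x, y, z) ∈ tri e1 e2 e3 then
    (if (x, y, z) ∈ H then 1 - triDens H e1 e2 e3 else -triDens H e1 e2 e3)
  else 0

/-- The octahedron sum from the definition of quasirandomness. -/
def octSum {α : Type*} [DecidableEq α] (H : Finset (α × α × α)) (e1 e2 e3 : Finset (α × α))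
    (X Y Z : Finset α) : ℝ :=
  ∑ x0 ∈ X, ∑ x1 ∈ X, ∑ y0 ∈ Y, ∑ y1 ∈ Y, ∑ z0 ∈ Z, ∑ z1 ∈ Z,
    fQ H e1 e2 e3 x0 y0 z0 * fQ H e1 e2 e3 x0 y0 z1 * fQ H e1 e2 e3 x0 y1 z0 *
      fQ H e1 e2 e3 x0 y1 z1 * fQ H e1 e2 e3 x1 y0 z0 * fQ H e1 e2 e3 x1 y0 z1 *
      fQ H e1 e2 e3 x1 y1 z0 * fQ H e1 e2 e3 x1 y1 z1

/-- The triad `(e1, e2, e3)` on vertex classes `(X, Y, Z)` with `d(e1) = d(e2) = d(e3) = d`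
and `|X| = |Y| = |Z| = n` is `a`-quasirandom in `H`: the octahedron sum is at most
`a d¹² n⁶`. -/
def Quasirandom {α : Type*} [DecidableEq α] (a : ℝ) (H : Finset (α × α × α))
    (e1 e2 e3 : Finset (α × α)) (X Y Z : Finset α) : Prop :=
  ∀ (d : ℝ) (n : ℕ), bmDens e1 X Y = d → bmDens e2 X Z = d → bmDens e3 Y Z = d →
    X.card = n → Y.card = n → Z.card = n →
    octSum H e1 e2 e3 X Y Z ≤ a * d ^ 12 * (n : ℝ) ^ 6

/-- The `(ℓ,t,ε₂)`-equipartition `(Z, E)` is an `a`-quasirandom partition of the 3-graph `H`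
with vertex set `S`: `Σ t(P) ≤ a |S|³`, summed over non-`a`-quasirandom triads. -/
def QuasirandomPartition {α : Type*} [DecidableEq α] (a : ℝ) (H : Finset (α × α × α))
    (S : Finset α) (Z : Finset (Finset α)) (E : Finset (Finset (α × α))) : Prop :=
  ∑ e ∈ (E ×ˢ E ×ˢ E).filter fun e => ∃ Z1 ∈ Z, ∃ Z2 ∈ Z, ∃ Z3 ∈ Z,
      Z1 ≠ Z2 ∧ Z1 ≠ Z3 ∧ Z2 ≠ Z3 ∧
      e.1 ⊆ Z1 ×ˢ Z2 ∧ e.2.1 ⊆ Z1 ×ˢ Z3 ∧ e.2.2 ⊆ Z2 ×ˢ Z3 ∧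
      ¬ Quasirandom a H e.1 e.2.1 e.2.2 Z1 Z2 Z3,
    ((tri e.1 e.2.1 e.2.2).card : ℝ) ≤ a * (S.card : ℝ) ^ 3

/-- `e(i) = 2^(i+10)`. -/
def efn (i : ℕ) : ℕ := 2 ^ (i + 10)

/-- `t(1) = 2^250` and `t(i+1) = 2^(t(i)/e(i))` for `i ≥ 1`. -/
def tfn : ℕ → ℕ
  | 0 => 0
  | 1 => 2 ^ 250
  | n + 2 => 2 ^ (tfn (n + 1) / efn (n + 1))

/-- `w(1) = 1` and `w(i+1) = w*(i) = t(w(i))/e(i)` for `i ≥ 1`. -/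
def wfn : ℕ → ℕ
  | 0 => 0
  | 1 => 1
  | n + 2 => tfn (wfn (n + 1)) / efn (n + 1)

/-- `w*(s) = t(w(s))/e(s)`. -/
def wstar (s : ℕ) : ℕ := tfn (wfn s) / efn s

end

/-!
Let `m` be the common size of the parts of `P`, so that `|S| ≥ m |P|`. If `q ⊆_β p`, then more
than `(1 - β) |q|` elements of `q` lie in `p`, so `(1 - β) |q| ≤ m`. The sets `q ∈_β P` of `Q`
together contain at least `(1 - β) |S|` elements, hence
`(1 - β)² m |P| ≤ (1 - β)² |S| ≤ ∑_{q ∈_β P} (1 - β) |q| ≤ m |Q|`, and `m` cancels.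
-/

section

variable {α : Type*} {β : ℝ} {S T : Finset α} {P Q : Finset (Finset α)}

theorem IsPartition.pairwiseDisjoint (hP : IsPartition P S) :
    (P : Set (Finset α)).PairwiseDisjoint id := fun p hp _ hq hpq ↦
  Finset.disjoint_left.2 fun v hvp hvq ↦
    hpq ((hP.2.2 v (hP.2.1 p hp hvp)).unique ⟨hp, hvp⟩ ⟨hq, hvq⟩)

theorem EquitableParts.card_mul_card_le (hP : EquitableParts P)
    (hdisj : (P : Set (Finset α)).PairwiseDisjoint id) (hsub : ∀ p ∈ P, p ⊆ S)
    {p : Finset α} (hp : p ∈ P) : P.card * p.card ≤ S.card :=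
  calc
    P.card * p.card = ∑ q ∈ P, q.card := (Finset.sum_const_nat fun q hq ↦ hP q hq p hp).symm
    _ = (P.biUnion id).card := (Finset.card_biUnion hdisj).symm
    _ ≤ S.card := Finset.card_le_card (Finset.biUnion_subset.2 hsub)

variable [DecidableEq α]

theorem IsPartition.subset_biUnion (hP : IsPartition P S) : S ⊆ P.biUnion id := fun v hv ↦
  Finset.mem_biUnion.2 (hP.2.2 v hv).exists

theorem ApproxSub.one_sub_mul_card_lt_card_inter (h : ApproxSub β S T) :
    (1 - β) * S.card < (S ∩ T).card := by
  have hdiff : ((S \ T).card : ℝ) < β * S.card := h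
  have hsplit : ((S \ T).card : ℝ) + (S ∩ T).card = S.card :=
    mod_cast Finset.card_sdiff_add_card_inter S T
  linarith

theorem ApproxMem.one_sub_mul_card_le (h : ApproxMem β S P) (hP : EquitableParts P)
    {p : Finset α} (hp : p ∈ P) : (1 - β) * S.card ≤ p.card := by
  obtain ⟨p', hp', hSp'⟩ := h
  calc
    (1 - β) * S.card ≤ (S ∩ p').card := hSp'.one_sub_mul_card_lt_card_inter.le
    _ ≤ p'.card := mod_cast Finset.card_le_card Finset.inter_subset_right
    _ = p.card := mod_cast hP p' hp' p hp

theorem ApproxRefines.one_sub_mul_card_le_sum (h : ApproxRefines β Q P S)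
    (hQ : S ⊆ Q.biUnion id) :
    (1 - β) * S.card ≤ ∑ q ∈ Q with ApproxMem β q P, (q.card : ℝ) := by
  have hbad : ∑ q ∈ Q with ¬ ApproxMem β q P, (q.card : ℝ) ≤ β * S.card := h
  have hcover : (S.card : ℝ) ≤ ∑ q ∈ Q, (q.card : ℝ) :=
    mod_cast (Finset.card_le_card hQ).trans Finset.card_biUnion_le
  have hsplit := Finset.sum_filter_add_sum_filter_not Q (ApproxMem β · P) fun q ↦ (q.card : ℝ)
  linarith

theorem EquitableParts.one_sub_mul_sum_card_le (hP : EquitableParts P) (Q : Finset (Finset α))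
    {p : Finset α} (hp : p ∈ P) :
    (1 - β) * ∑ q ∈ Q with ApproxMem β q P, (q.card : ℝ) ≤ Q.card * p.card :=
  calc
    (1 - β) * ∑ q ∈ Q with ApproxMem β q P, (q.card : ℝ)
        = ∑ q ∈ Q with ApproxMem β q P, (1 - β) * (q.card : ℝ) := Finset.mul_sum ..
    _ ≤ (Q.filter (ApproxMem β · P)).card • (p.card : ℝ) :=
      Finset.sum_le_card_nsmul _ _ _ fun _ hq ↦
        (Finset.mem_filter.1 hq).2.one_sub_mul_card_le hP hp
    _ ≤ Q.card * p.card := by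
      rw [nsmul_eq_mul]
      gcongr
      exact Finset.filter_subset ..

theorem approx_refinement_size_general (hQ : S ⊆ Q.biUnion id) (hne : ∀ p ∈ P, p.Nonempty)
    (hsub : ∀ p ∈ P, p ⊆ S) (hdisj : (P : Set (Finset α)).PairwiseDisjoint id)
    (hP : EquitableParts P) (hβ : β ≤ 1) (h : ApproxRefines β Q P S) :
    (1 - β) ^ 2 * P.card ≤ Q.card := by
  obtain rfl | ⟨p, hp⟩ := P.eq_empty_or_nonempty
  · simp
  have hp_pos : (0 : ℝ) < p.card := mod_cast (hne p hp).card_pos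
  have : 0 ≤ 1 - β := sub_nonneg.2 hβ
  refine le_of_mul_le_mul_right ?_ hp_pos
  calc
    (1 - β) ^ 2 * P.card * p.card = (1 - β) ^ 2 * (P.card * p.card) := mul_assoc ..
    _ ≤ (1 - β) ^ 2 * S.card := by
      gcongr
      exact_mod_cast hP.card_mul_card_le hdisj hsub hp
    _ = (1 - β) * ((1 - β) * S.card) := by ring
    _ ≤ (1 - β) * ∑ q ∈ Q with ApproxMem β q P, (q.card : ℝ) := by
      gcongr
      exact h.one_sub_mul_card_le_sum hQ
    _ ≤ Q.card * p.card := hP.one_sub_mul_sum_card_le Q hp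

end

/-- **Claim 3.6.** If `Q ≺_{1/2} P` and `P` is equitable then `|Q| ≥ |P|/4`. -/
theorem approx_refinement_size {α : Type*} [DecidableEq α]
    (S : Finset α) (Q P : Finset (Finset α))
    (hQ : IsPartition Q S) (hP : IsPartition P S) (hPequi : EquitableParts P)
    (href : ApproxRefines (1 / 2) Q P S) :
    (Q.card : ℝ) ≥ (1 / 4) * (P.card : ℝ) := by
  linarith [approx_refinement_size_general hQ.subset_biUnion hP.1 hP.2.1 hP.pairwiseDisjoint hPequi
    (by norm_num) href]
end

section
/- Let P be a tripartite graph on finite vertex classes (A,B,C) given by bipartite graphs E_AB between A and B, E_AC between A and C, and E_BC between B and C. If both E_AC and E_BC are ε-regular, then the number t(P) of triangles of P, i.e., triples (a,b,c) ∈ A × B × C with (a,b) ∈ E_AB, (a,c) ∈ E_AC and (b,c) ∈ E_BC, satisfies t(P) = (d(E_AB)·d(E_AC)·d(E_BC) ± 7ε)·|A||B||C|. -/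
open scoped Classical

/-!
Regularity of `G` on `(X, Y)` controls its cut norm: `e(X', Y')` differs from `d(G)|X'||Y'|` by at
most `ε|X||Y|` for *all* `X' ⊆ X` and `Y' ⊆ Y`, because a pair with a side too small for regularity
to apply spans few edges anyway. A triangle over `b ∈ B` is an edge of `E_AC` between the
neighbourhoods of `b` in `A` and in `C`, so regularity of `E_AC` shows that `t(P)` is close to
`d(E_AC)` times the number of paths `a - b - c`. Grouped by `a ∈ A`, these paths are the edges of
`E_BC` between the neighbourhood of `a` in `B` and all of `C`, so regularity of `E_BC` shows that
there are about `d(E_AB)d(E_BC)|A||B||C|` of them. Each of the two steps costs `ε|A||B||C|`.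
-/

/-- The neighbourhood in `A` of a right vertex `b` of the bipartite graph `G`. -/
noncomputable def leftNbrs {α β : Type*} (G : Finset (α × β)) (A : Finset α) (b : β) : Finset α :=
  {a ∈ A | (a, b) ∈ G}

/-- The neighbourhood in `B` of a left vertex `a` of the bipartite graph `G`. -/
noncomputable def rightNbrs {α β : Type*} (G : Finset (α × β)) (a : α) (B : Finset β) : Finset β :=
  {b ∈ B | (a, b) ∈ G}

theorem abs_sum_le_card_mul {ι R : Type*} [Ring R] [LinearOrder R] [IsOrderedRing R]
    {s : Finset ι} {f : ι → R} {K : R} (hf : ∀ i ∈ s, |f i| ≤ K) :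
    |∑ i ∈ s, f i| ≤ s.card * K :=
  calc |∑ i ∈ s, f i| ≤ ∑ i ∈ s, |f i| := Finset.abs_sum_le_sum_abs f s
    _ ≤ s.card • K := Finset.sum_le_card_nsmul s _ K hf
    _ = s.card * K := nsmul_eq_mul _ _

section Bipartite

variable {α β : Type*}

theorem leftNbrs_subset (G : Finset (α × β)) (A : Finset α) (b : β) : leftNbrs G A b ⊆ A :=
  Finset.filter_subset _ _

theorem rightNbrs_subset (G : Finset (α × β)) (a : α) (B : Finset β) : rightNbrs G a B ⊆ B :=
  Finset.filter_subset _ _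

theorem bmEdges_eq_sum_card_rightNbrs (G : Finset (α × β)) (A : Finset α) (B : Finset β) :
    bmEdges G A B = ∑ a ∈ A, (rightNbrs G a B).card := by
  have edges_eq : {p ∈ G | p.1 ∈ A ∧ p.2 ∈ B} = {p ∈ A ×ˢ B | p ∈ G} := by
    ext p
    simp only [Finset.mem_filter, Finset.mem_product]
    tauto
  simp only [bmEdges, rightNbrs, edges_eq, Finset.card_filter, Finset.sum_product]

theorem bmEdges_le_card_mul_card (G : Finset (α × β)) (A : Finset α) (B : Finset β) :
    bmEdges G A B ≤ A.card * B.card := by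
  rw [bmEdges_eq_sum_card_rightNbrs]
  exact Finset.sum_le_card_nsmul A _ _ fun a _ => Finset.card_le_card (rightNbrs_subset G a B)

theorem bmDens_nonneg (G : Finset (α × β)) (A : Finset α) (B : Finset β) : 0 ≤ bmDens G A B := by
  unfold bmDens
  positivity

theorem bmDens_le_one (G : Finset (α × β)) (A : Finset α) (B : Finset β) : bmDens G A B ≤ 1 :=
  div_le_one_of_le₀ (mod_cast bmEdges_le_card_mul_card G A B) (by positivity)

theorem bmDens_mul_card_mul_card (G : Finset (α × β)) (A : Finset α) (B : Finset β) :
    bmDens G A B * (A.card * B.card) = bmEdges G A B := by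
  refine div_mul_cancel_of_imp fun hcard => ?_
  have hle := bmEdges_le_card_mul_card G A B
  norm_cast at hcard ⊢
  omega

theorem abs_bmDens_sub_bmDens_le_one (G : Finset (α × β)) (A A' : Finset α) (B B' : Finset β) :
    |bmDens G A' B' - bmDens G A B| ≤ 1 :=
  abs_sub_le_of_nonneg_of_le (bmDens_nonneg G A' B') (bmDens_le_one G A' B')
    (bmDens_nonneg G A B) (bmDens_le_one G A B)

variable {ε : ℝ} {G : Finset (α × β)} {A A' : Finset α} {B B' : Finset β}

theorem SzReg.nonneg (hG : SzReg ε G A B) : 0 ≤ ε := by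
  by_contra! hε
  have hself := hG A subset_rfl B subset_rfl
    ((mul_nonpos_of_nonpos_of_nonneg hε.le (by positivity)).trans (by positivity))
    ((mul_nonpos_of_nonpos_of_nonneg hε.le (by positivity)).trans (by positivity))
  exact hε.not_ge ((abs_nonneg _).trans hself)

theorem SzReg.abs_bmEdges_sub_le (hG : SzReg ε G A B) (hA : A' ⊆ A) (hB : B' ⊆ B) :
    |bmEdges G A' B' - bmDens G A B * (A'.card * B'.card)| ≤ ε * (A.card * B.card) := by
  have hε := hG.nonneg
  have hcardA : (A'.card : ℝ) ≤ A.card := mod_cast Finset.card_le_card hA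
  have hcardB : (B'.card : ℝ) ≤ B.card := mod_cast Finset.card_le_card hB
  have trivial_bound : |bmDens G A' B' - bmDens G A B| * (A'.card * B'.card) ≤
      A'.card * B'.card :=
    mul_le_of_le_one_left (by positivity) (abs_bmDens_sub_bmDens_le_one G A A' B B')
  rw [← bmDens_mul_card_mul_card G A' B', ← sub_mul, abs_mul,
    abs_of_nonneg (by positivity : (0 : ℝ) ≤ A'.card * B'.card)]
  rcases lt_or_ge (A'.card : ℝ) (ε * A.card) with smallA | largeA
  · calc _ ≤ (A'.card : ℝ) * B'.card := trivial_bound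
      _ ≤ ε * A.card * B.card := by gcongr
      _ = ε * (A.card * B.card) := by ring
  rcases lt_or_ge (B'.card : ℝ) (ε * B.card) with smallB | largeB
  · calc _ ≤ (A'.card : ℝ) * B'.card := trivial_bound
      _ ≤ A.card * (ε * B.card) := by gcongr
      _ = ε * (A.card * B.card) := by ring
  · have regular := hG A' hA B' hB largeA largeB
    gcongr

end Bipartite

section Tripartite

variable {α β γ : Type*} {A : Finset α} {B : Finset β} {C : Finset γ}
  {EAB : Finset (α × β)} {EAC : Finset (α × γ)} {EBC : Finset (β × γ)} {ε δ : ℝ}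

theorem sum_card_leftNbrs_mul_card_rightNbrs (A : Finset α) (B : Finset β) (C : Finset γ)
    (EAB : Finset (α × β)) (EBC : Finset (β × γ)) :
    ∑ b ∈ B, (leftNbrs EAB A b).card * (rightNbrs EBC b C).card =
      ∑ a ∈ A, bmEdges EBC (rightNbrs EAB a B) C :=
  calc ∑ b ∈ B, (leftNbrs EAB A b).card * (rightNbrs EBC b C).card
      = ∑ b ∈ B, ∑ _a ∈ leftNbrs EAB A b, (rightNbrs EBC b C).card := by
        simp only [Finset.sum_const, smul_eq_mul]
    _ = ∑ a ∈ A, ∑ b ∈ rightNbrs EAB a B, (rightNbrs EBC b C).card :=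
        Finset.sum_comm' fun b a => by
          simp only [leftNbrs, rightNbrs, Finset.mem_filter]
          tauto
    _ = ∑ a ∈ A, bmEdges EBC (rightNbrs EAB a B) C := by
        simp only [bmEdges_eq_sum_card_rightNbrs]

theorem SzReg.abs_sum_card_nbrs_sub_le (hBC : SzReg ε EBC B C) (A : Finset α)
    (EAB : Finset (α × β)) :
    |∑ b ∈ B, ((leftNbrs EAB A b).card * (rightNbrs EBC b C).card : ℝ) -
        bmDens EAB A B * bmDens EBC B C * (A.card * B.card * C.card)| ≤
      ε * (A.card * B.card * C.card) := by
  have paths_eq : ∑ b ∈ B, ((leftNbrs EAB A b).card * (rightNbrs EBC b C).card : ℝ) =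
      ∑ a ∈ A, (bmEdges EBC (rightNbrs EAB a B) C : ℝ) :=
    mod_cast sum_card_leftNbrs_mul_card_rightNbrs A B C EAB EBC
  have expected_eq : bmDens EAB A B * bmDens EBC B C * (A.card * B.card * C.card) =
      ∑ a ∈ A, bmDens EBC B C * ((rightNbrs EAB a B).card * C.card) := by
    rw [← Finset.mul_sum, ← Finset.sum_mul, ← Nat.cast_sum, ← bmEdges_eq_sum_card_rightNbrs,
      ← bmDens_mul_card_mul_card]
    ring
  rw [paths_eq, expected_eq, ← Finset.sum_sub_distrib]
  calc _ ≤ A.card * (ε * (B.card * C.card)) := abs_sum_le_card_mul fun a _ =>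
        hBC.abs_bmEdges_sub_le (rightNbrs_subset EAB a B) subset_rfl
    _ = ε * (A.card * B.card * C.card) := by ring

variable [DecidableEq α] [DecidableEq β] [DecidableEq γ]

theorem mem_tri {a : α} {b : β} {c : γ} :
    (a, b, c) ∈ tri EAB EAC EBC ↔ (a, b) ∈ EAB ∧ (a, c) ∈ EAC ∧ (b, c) ∈ EBC := by
  simp only [tri, Finset.mem_image, Finset.mem_filter, Finset.mem_product, Prod.exists,
    Prod.mk.injEq]
  constructor
  · rintro ⟨a, b, _, c, ⟨⟨hab, hbc⟩, rfl, hac⟩, rfl, rfl, rfl⟩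
    exact ⟨hab, hac, hbc⟩
  · rintro ⟨hab, hac, hbc⟩
    exact ⟨a, b, b, c, ⟨⟨hab, hbc⟩, rfl, hac⟩, rfl, rfl, rfl⟩

theorem card_tri_eq_sum_bmEdges_nbrs (hAB : EAB ⊆ A ×ˢ B) (hAC : EAC ⊆ A ×ˢ C) :
    (tri EAB EAC EBC).card =
      ∑ b ∈ B, bmEdges EAC (leftNbrs EAB A b) (rightNbrs EBC b C) := by
  simp only [bmEdges, ← Finset.card_sigma]
  refine Finset.card_nbij' (fun t => ⟨t.2.1, t.1, t.2.2⟩) (fun s => (s.2.1, s.1, s.2.2)) ?_ ?_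
    (fun _ _ => rfl) (fun _ _ => rfl)
  · rintro ⟨a, b, c⟩ habc
    obtain ⟨hab, hac, hbc⟩ := mem_tri.1 habc
    obtain ⟨ha, hb⟩ := Finset.mem_product.1 (hAB hab)
    obtain ⟨-, hc⟩ := Finset.mem_product.1 (hAC hac)
    simp [leftNbrs, rightNbrs, *]
  · rintro ⟨b, a, c⟩ hbac
    simp only [leftNbrs, rightNbrs, Finset.mem_coe, Finset.mem_sigma, Finset.mem_filter] at hbac
    obtain ⟨-, hac, ⟨-, hab⟩, -, hbc⟩ := hbac
    exact mem_tri.2 ⟨hab, hac, hbc⟩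

theorem SzReg.abs_card_tri_sub_le (hACreg : SzReg ε EAC A C) (hAB : EAB ⊆ A ×ˢ B)
    (hAC : EAC ⊆ A ×ˢ C) (EBC : Finset (β × γ)) :
    |(tri EAB EAC EBC).card - bmDens EAC A C *
        ∑ b ∈ B, ((leftNbrs EAB A b).card * (rightNbrs EBC b C).card : ℝ)| ≤
      ε * (A.card * B.card * C.card) := by
  rw [card_tri_eq_sum_bmEdges_nbrs hAB hAC, Nat.cast_sum, Finset.mul_sum,
    ← Finset.sum_sub_distrib]
  calc _ ≤ B.card * (ε * (A.card * C.card)) := abs_sum_le_card_mul fun b _ =>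
        hACreg.abs_bmEdges_sub_le (leftNbrs_subset EAB A b) (rightNbrs_subset EBC b C)
    _ = ε * (A.card * B.card * C.card) := by ring

theorem triangle_counting_general (hAB : EAB ⊆ A ×ˢ B) (hAC : EAC ⊆ A ×ˢ C)
    (hACreg : SzReg ε EAC A C) (hBCreg : SzReg δ EBC B C) :
    |(tri EAB EAC EBC).card -
        bmDens EAB A B * bmDens EAC A C * bmDens EBC B C * (A.card * B.card * C.card)| ≤
      (ε + bmDens EAC A C * δ) * (A.card * B.card * C.card) := by
  set paths : ℝ := ∑ b ∈ B, ((leftNbrs EAB A b).card * (rightNbrs EBC b C).card : ℝ)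
  set V : ℝ := A.card * B.card * C.card
  have triangles_near_paths : |(tri EAB EAC EBC).card - bmDens EAC A C * paths| ≤ ε * V :=
    hACreg.abs_card_tri_sub_le hAB hAC EBC
  have paths_near_expected : |paths - bmDens EAB A B * bmDens EBC B C * V| ≤ δ * V :=
    hBCreg.abs_sum_card_nbrs_sub_le A EAB
  have hd := bmDens_nonneg EAC A C
  calc _ = |((tri EAB EAC EBC).card - bmDens EAC A C * paths) +
          bmDens EAC A C * (paths - bmDens EAB A B * bmDens EBC B C * V)| := by ring_nf
    _ ≤ |(tri EAB EAC EBC).card - bmDens EAC A C * paths| +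
          bmDens EAC A C * |paths - bmDens EAB A B * bmDens EBC B C * V| := by
        grw [abs_add_le, abs_mul, abs_of_nonneg hd]
    _ ≤ ε * V + bmDens EAC A C * (δ * V) := by gcongr
    _ = (ε + bmDens EAC A C * δ) * V := by ring

end Tripartite

/-- **Lemma A.3 (triangle counting lemma).** -/
theorem triangle_counting {α β γ : Type*} [DecidableEq α] [DecidableEq β] [DecidableEq γ]
    (A : Finset α) (B : Finset β) (C : Finset γ)
    (EAB : Finset (α × β)) (EAC : Finset (α × γ)) (EBC : Finset (β × γ))
    (hAB : EAB ⊆ A ×ˢ B) (hAC : EAC ⊆ A ×ˢ C) (hBC : EBC ⊆ B ×ˢ C)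
    (ε : ℝ) (hACreg : SzReg ε EAC A C) (hBCreg : SzReg ε EBC B C) :
    |((tri EAB EAC EBC).card : ℝ) -
        bmDens EAB A B * bmDens EAC A C * bmDens EBC B C *
          ((A.card : ℝ) * (B.card : ℝ) * (C.card : ℝ))| ≤
      7 * ε * ((A.card : ℝ) * (B.card : ℝ) * (C.card : ℝ)) := by
  have hε := hACreg.nonneg
  refine (triangle_counting_general hAB hAC hACreg hBCreg).trans ?_
  gcongr
  linarith [mul_le_of_le_one_left hε (bmDens_le_one EAC A C)]
end
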